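/- arXiv:1603.03728 — 6 statements merged into one kernel-verified Lean document; each statement's English description precedes it below -/
import Mathlib

section
/- Let s, t be complex numbers with s ≠ 0, and let X = [[s, 1], [0, 1/s]], Y = [[s, 0], [-t, 1/s]] be 2×2 complex matrices, and W = X·Y⁻¹·X⁻¹·Y. Then W·X = Y·W if and only if 3 - 1/s² - s² + 3t - t/s² - s²·t + t² = 0. -/
/-!
Multiplying out, with `f` the left-hand side of the polynomial equation, gives Riley's identity
`W * X - Y * W = f • !![0, 1; t, 0]`. The right-hand matrix has an entry equal to `1`, so the
difference vanishes exactly when `f = 0`.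
-/

/-- For the standard parametrized pair of matrices `X`, `Y` associated to the
generators of the figure-eight knot group, with `W = X * Y⁻¹ * X⁻¹ * Y`, the
relation `W * X = Y * W` holds iff `f(s,t) = 0`. -/
theorem stmt_0 (s t : ℂ) (hs : s ≠ 0)
    (X Y W : Matrix (Fin 2) (Fin 2) ℂ)
    (hX : X = !![s, 1; 0, s⁻¹])
    (hY : Y = !![s, 0; -t, s⁻¹])
    (hW : W = X * Y⁻¹ * X⁻¹ * Y) :
    W * X = Y * W ↔ 3 - 1 / s ^ 2 - s ^ 2 + 3 * t - t / s ^ 2 - s ^ 2 * t + t ^ 2 = 0 := by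
  have hXi : X⁻¹ = !![s⁻¹, -1; 0, s] := by
    apply Matrix.inv_eq_right_inv
    rw [hX, Matrix.mul_fin_two, Matrix.one_fin_two]
    simp [hs]
  have hYi : Y⁻¹ = !![s⁻¹, 0; t, s] := by
    apply Matrix.inv_eq_right_inv
    rw [hY, Matrix.mul_fin_two, Matrix.one_fin_two]
    simp [hs, mul_comm]
  have key : W * X - Y * W =
      (3 - 1 / s ^ 2 - s ^ 2 + 3 * t - t / s ^ 2 - s ^ 2 * t + t ^ 2) • !![0, 1; t, 0] := by
    rw [hW, hXi, hYi, hX, hY]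
    simp only [Matrix.mul_fin_two]
    ext i j
    fin_cases i <;> fin_cases j <;> simp <;> field_simp <;> ring
  rw [← sub_eq_zero, key]
  constructor
  · intro h
    simpa using congrFun (congrFun h 0) 1
  · intro h
    rw [h, zero_smul]
end

section
/- Let G be the group presented by generators x, y and the single relator (xy⁻¹x⁻¹y)·x·(y·(xy⁻¹x⁻¹y))⁻¹ (i.e., G = ⟨x, y | wx = yw⟩ with w = xy⁻¹x⁻¹y, the figure-eight knot group). Let s, t be complex numbers with s ≠ 0, and let X = [[s, 1], [0, 1/s]], Y = [[s, 0], [-t, 1/s]], regarded as elements of SL(2, ℂ). Then there exists a group homomorphism ρ : G → SL(2, ℂ) with ρ(x) = X and ρ(y) = Y if and only if 3 - 1/s² - s² + 3t - t/s² - s²·t + t² = 0. -/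
/-!
A homomorphism out of a presented group is a choice of images of the generators that kills the
relator, so the claim is that `W X = Y W`, with `W = X Y⁻¹ X⁻¹ Y`, holds exactly when `f(s,t) = 0`.
Both sides are explicit matrices, and `W X - Y W = !![0, f; t f, 0]`
(Riley's computation, `riley_matrix`): its upper right entry is `f`, and all its entries are
multiples of `f`.
-/

/-- The single relator `w * x * (y * w)⁻¹` (where `w = x * y⁻¹ * x⁻¹ * y`) of the
figure-eight knot group, as a subset of the free group on two generators. -/
def figureEightRels : Set (FreeGroup (Fin 2)) :=
  {(FreeGroup.of 0 * (FreeGroup.of 1)⁻¹ * (FreeGroup.of 0)⁻¹ * FreeGroup.of 1) *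
      FreeGroup.of 0 *
      (FreeGroup.of 1 *
        (FreeGroup.of 0 * (FreeGroup.of 1)⁻¹ * (FreeGroup.of 0)⁻¹ * FreeGroup.of 1))⁻¹}

/-- `W X - Y W` for `W = X Y⁻¹ X⁻¹ Y`, the inverses of the determinant-one matrices being written
as adjugates and `s⁻¹` as a variable `u` with `s u = 1`. -/
lemma riley_matrix (s u t : ℂ) (h : s * u = 1) :
    !![s, 1; 0, u] * !![u, 0; t, s] * !![u, -1; 0, s] * !![s, 0; -t, u] * !![s, 1; 0, u]
      - !![s, 0; -t, u] *
        (!![s, 1; 0, u] * !![u, 0; t, s] * !![u, -1; 0, s] * !![s, 0; -t, u]) =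
    (3 - u ^ 2 - s ^ 2 + 3 * t - t * u ^ 2 - s ^ 2 * t + t ^ 2) • !![0, 1; t, 0] := by
  ext i j
  fin_cases i <;> fin_cases j <;> simp <;> grind

/-- Universal property of the presentation: the images of the generators extend to a homomorphism
exactly when they satisfy the relation. -/
lemma exists_hom_iff {H : Type*} [Group H] (X Y : H) :
    (∃ ρ : PresentedGroup figureEightRels →* H,
        ρ (PresentedGroup.of 0) = X ∧ ρ (PresentedGroup.of 1) = Y) ↔
      X * Y⁻¹ * X⁻¹ * Y * X = Y * (X * Y⁻¹ * X⁻¹ * Y) := by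
  constructor
  · rintro ⟨ρ, rfl, rfl⟩
    have h := congrArg ρ (PresentedGroup.one_of_mem (rels := figureEightRels) rfl)
    simp only [map_mul, map_inv, map_one] at h
    exact mul_inv_eq_one.mp h
  · intro h
    have hr : ∀ r ∈ figureEightRels, FreeGroup.lift ![X, Y] r = 1 := by
      rintro r rfl
      simpa [mul_inv_eq_one, mul_assoc] using mul_inv_eq_one.mpr h
    exact ⟨PresentedGroup.toGroup hr, by simp, by simp⟩

/-- There is a representation of the figure-eight knot group sending `x ↦ X`,
`y ↦ Y` iff `f(s,t) = 0`. -/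
theorem stmt_1 (s t : ℂ) (hs : s ≠ 0)
    (X Y : Matrix.SpecialLinearGroup (Fin 2) ℂ)
    (hX : (X : Matrix (Fin 2) (Fin 2) ℂ) = !![s, 1; 0, s⁻¹])
    (hY : (Y : Matrix (Fin 2) (Fin 2) ℂ) = !![s, 0; -t, s⁻¹]) :
    (∃ ρ : PresentedGroup figureEightRels →* Matrix.SpecialLinearGroup (Fin 2) ℂ,
        ρ (PresentedGroup.of 0) = X ∧ ρ (PresentedGroup.of 1) = Y) ↔
      3 - 1 / s ^ 2 - s ^ 2 + 3 * t - t / s ^ 2 - s ^ 2 * t + t ^ 2 = 0 := by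
  have key (A B : Matrix.SpecialLinearGroup (Fin 2) ℂ) :
      A = B ↔ (A : Matrix (Fin 2) (Fin 2) ℂ) - (B : Matrix (Fin 2) (Fin 2) ℂ) = 0 :=
    Subtype.ext_iff.trans sub_eq_zero.symm
  rw [exists_hom_iff, key]
  simp only [Matrix.SpecialLinearGroup.coe_mul, Matrix.SpecialLinearGroup.coe_inv, hX, hY,
    Matrix.adjugate_fin_two_of, neg_neg, neg_zero]
  rw [riley_matrix s s⁻¹ t (mul_inv_cancel₀ hs)]
  -- The matrix `!![0, 1; t, 0]` is nonzero, so only the scalar factor can vanish.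
  have hM : !![0, 1; t, 0] ≠ (0 : Matrix (Fin 2) (Fin 2) ℂ) := fun h => by
    simpa using congrFun (congrFun h 0) 1
  rw [smul_eq_zero, or_iff_left hM]
  simp only [inv_pow, one_mul, div_eq_mul_inv]
end

section
/- Let s be a nonzero real number. Then 1 - 2s² - s⁴ - 2s⁶ + s⁸ ≥ 0 if and only if one of the following holds: s ≤ -√((3+√5)/2), or -√((3-√5)/2) ≤ s < 0, or 0 < s ≤ √((3-√5)/2), or √((3+√5)/2) ≤ s. -/
/-!
With `x = s ^ 2` the polynomial factors as `(x ^ 2 - 3 * x + 1) * (x ^ 2 + x + 1)`. The second factor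
is positive, and the roots of the first are `(3 ± √5) / 2`, both positive, so the polynomial is
nonnegative exactly when `s ^ 2` lies outside the open interval between these roots, that is, when
`|s|` lies outside the open interval between their square roots.
-/

/-- For real nonzero `s`, nonnegativity of `1 - 2s² - s⁴ - 2s⁶ + s⁸` is
characterized by the four intervals. -/
theorem stmt_4 (s : ℝ) (hs : s ≠ 0) :
    1 - 2 * s ^ 2 - s ^ 4 - 2 * s ^ 6 + s ^ 8 ≥ 0 ↔
      (s ≤ -Real.sqrt ((3 + Real.sqrt 5) / 2) ∨
        (-Real.sqrt ((3 - Real.sqrt 5) / 2) ≤ s ∧ s < 0) ∨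
        (0 < s ∧ s ≤ Real.sqrt ((3 - Real.sqrt 5) / 2)) ∨
        Real.sqrt ((3 + Real.sqrt 5) / 2) ≤ s) := by
  have h5 : Real.sqrt 5 ^ 2 = 5 := Real.sq_sqrt (by norm_num)
  have h5pos : 0 < Real.sqrt 5 := Real.sqrt_pos.mpr (by norm_num)
  have h5lt : Real.sqrt 5 < 3 := by nlinarith
  have hA2 : Real.sqrt ((3 + Real.sqrt 5) / 2) ^ 2 = (3 + Real.sqrt 5) / 2 :=
    Real.sq_sqrt (by linarith)
  have hB2 : Real.sqrt ((3 - Real.sqrt 5) / 2) ^ 2 = (3 - Real.sqrt 5) / 2 :=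
    Real.sq_sqrt (by linarith)
  have hA0 := Real.sqrt_nonneg ((3 + Real.sqrt 5) / 2)
  have hB0 := Real.sqrt_nonneg ((3 - Real.sqrt 5) / 2)
  set A := Real.sqrt ((3 + Real.sqrt 5) / 2)
  set B := Real.sqrt ((3 - Real.sqrt 5) / 2)
  have hfac : 1 - 2 * s ^ 2 - s ^ 4 - 2 * s ^ 6 + s ^ 8 =
      ((s ^ 2 - A ^ 2) * (s ^ 2 - B ^ 2)) * (s ^ 4 + s ^ 2 + 1) := by
    rw [hA2, hB2]
    linear_combination (s ^ 4 + s ^ 2 + 1) / 4 * h5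
  have hBA : B ^ 2 < A ^ 2 := by rw [hA2, hB2]; linarith
  have hout : 0 ≤ (s ^ 2 - A ^ 2) * (s ^ 2 - B ^ 2) ↔ A ≤ |s| ∨ |s| ≤ B := by
    have h1 : A ≤ |s| ↔ A ^ 2 ≤ s ^ 2 := by rw [sq_le_sq, abs_of_nonneg hA0]
    have h2 : |s| ≤ B ↔ s ^ 2 ≤ B ^ 2 := by rw [sq_le_sq, abs_of_nonneg hB0]
    rw [h1, h2, mul_nonneg_iff]
    grind
  rw [ge_iff_le, hfac, mul_nonneg_iff_of_pos_right (by positivity), hout, le_abs, abs_le]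
  rcases lt_or_gt_of_ne hs with h | h <;> grind
end

section
/- Let s be a nonzero real number with 1 - 2s² - s⁴ - 2s⁶ + s⁸ ≥ 0, and set t = (1 - 3s² + s⁴ + √(1 - 2s² - s⁴ - 2s⁶ + s⁸))/(2s²), a real number. Let X = [[s, 1], [0, 1/s]] and Y = [[s, 0], [-t, 1/s]] be 2×2 real matrices, and W = X·Y⁻¹·X⁻¹·Y. Then W·X = Y·W; in particular X and Y define a homomorphism from the figure-eight knot group ⟨x, y | wx = yw⟩ (w = xy⁻¹x⁻¹y) into SL(2, ℝ) sending x to X and y to Y. -/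
/-- The quadratic formula: the given `t` is a root of the Riley polynomial. -/
theorem riley_eq_zero (s t : ℝ) (hs : s ≠ 0)
    (hd : 1 - 2 * s ^ 2 - s ^ 4 - 2 * s ^ 6 + s ^ 8 ≥ 0)
    (ht : t = (1 - 3 * s ^ 2 + s ^ 4 +
      Real.sqrt (1 - 2 * s ^ 2 - s ^ 4 - 2 * s ^ 6 + s ^ 8)) / (2 * s ^ 2)) :
    s ^ 2 * t ^ 2 - (1 - 3 * s ^ 2 + s ^ 4) * (t + 1) = 0 := by
  have hq := Real.sq_sqrt hd
  rw [eq_div_iff (by positivity)] at ht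
  have hr : Real.sqrt (1 - 2 * s ^ 2 - s ^ 4 - 2 * s ^ 6 + s ^ 8) =
      t * (2 * s ^ 2) - (1 - 3 * s ^ 2 + s ^ 4) := by linarith
  rw [hr] at hq
  -- Completing the square multiplies the Riley polynomial by `4 s²`.
  have h4 : (4 * s ^ 2) * (s ^ 2 * t ^ 2 - (1 - 3 * s ^ 2 + s ^ 4) * (t + 1)) = 0 := by
    linear_combination hq
  exact (mul_eq_zero.mp h4).resolve_left (by positivity)

/-- The relation `W X = Y W`, with `X⁻¹` and `Y⁻¹` written out as explicit adjugates. -/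
theorem knot_relation (s t : ℝ) (hs : s ≠ 0)
    (h : s ^ 2 * t ^ 2 - (1 - 3 * s ^ 2 + s ^ 4) * (t + 1) = 0) :
    (!![s, 1; 0, s⁻¹] * !![s⁻¹, 0; t, s] * !![s⁻¹, -1; 0, s] * !![s, 0; -t, s⁻¹]) *
        !![s, 1; 0, s⁻¹] =
      !![s, 0; -t, s⁻¹] *
        (!![s, 1; 0, s⁻¹] * !![s⁻¹, 0; t, s] * !![s⁻¹, -1; 0, s] * !![s, 0; -t, s⁻¹]) := by
  ext i j
  fin_cases i <;> fin_cases j <;> simp [Matrix.mul_apply, Fin.sum_univ_two] <;> field_simp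
  all_goals first
    | ring1
    | linear_combination h
    | linear_combination -h
    | linear_combination t * h

/-- For real nonzero `s` in the region where the discriminant is nonnegative and
`t` the `+`-root, the relation `W * X = Y * W` holds, and `X, Y` define a
homomorphism from the figure-eight knot group into `SL(2,ℝ)`. -/
theorem stmt_5 (s : ℝ) (hs : s ≠ 0)
    (hd : 1 - 2 * s ^ 2 - s ^ 4 - 2 * s ^ 6 + s ^ 8 ≥ 0)
    (t : ℝ)
    (ht : t = (1 - 3 * s ^ 2 + s ^ 4 +
      Real.sqrt (1 - 2 * s ^ 2 - s ^ 4 - 2 * s ^ 6 + s ^ 8)) / (2 * s ^ 2))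
    (X Y W : Matrix (Fin 2) (Fin 2) ℝ)
    (hX : X = !![s, 1; 0, s⁻¹])
    (hY : Y = !![s, 0; -t, s⁻¹])
    (hW : W = X * Y⁻¹ * X⁻¹ * Y) :
    W * X = Y * W ∧
      ∃ (X' Y' : Matrix.SpecialLinearGroup (Fin 2) ℝ)
        (ρ : PresentedGroup figureEightRels →* Matrix.SpecialLinearGroup (Fin 2) ℝ),
        (X' : Matrix (Fin 2) (Fin 2) ℝ) = X ∧ (Y' : Matrix (Fin 2) (Fin 2) ℝ) = Y ∧
          ρ (PresentedGroup.of 0) = X' ∧ ρ (PresentedGroup.of 1) = Y' := by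
  have key := knot_relation s t hs (riley_eq_zero s t hs hd ht)
  have hXi : X⁻¹ = !![s⁻¹, -1; 0, s] := by
    rw [hX, Matrix.inv_def]
    simp [Matrix.det_fin_two, Matrix.adjugate_fin_two, hs]
  have hYi : Y⁻¹ = !![s⁻¹, 0; t, s] := by
    rw [hY, Matrix.inv_def]
    simp [Matrix.det_fin_two, Matrix.adjugate_fin_two, hs]
  have hXd : (!![s, 1; 0, s⁻¹] : Matrix (Fin 2) (Fin 2) ℝ).det = 1 := by
    simp [Matrix.det_fin_two, hs]
  have hYd : (!![s, 0; -t, s⁻¹] : Matrix (Fin 2) (Fin 2) ℝ).det = 1 := by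
    simp [Matrix.det_fin_two, hs]
  refine ⟨by rw [hW, hXi, hYi, hX, hY]; exact key, ?_⟩
  let A : Matrix.SpecialLinearGroup (Fin 2) ℝ := ⟨_, hXd⟩
  let B : Matrix.SpecialLinearGroup (Fin 2) ℝ := ⟨_, hYd⟩
  have hrel : (A * B⁻¹ * A⁻¹ * B) * A = B * (A * B⁻¹ * A⁻¹ * B) := by
    apply Subtype.ext
    simp only [Matrix.SpecialLinearGroup.coe_mul, Matrix.SpecialLinearGroup.coe_inv]
    simpa only [A, B, Matrix.adjugate_fin_two_of, neg_neg, neg_zero] using key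
  have hlift : ∀ r ∈ figureEightRels, FreeGroup.lift ![A, B] r = 1 := by
    intro r hr
    rw [figureEightRels, Set.mem_singleton_iff] at hr
    subst hr
    simp only [map_mul, map_inv, FreeGroup.lift_apply_of, Matrix.cons_val_zero,
      Matrix.cons_val_one]
    rw [mul_inv_eq_one]
    exact hrel
  exact ⟨A, B, PresentedGroup.toGroup hlift, hX.symm, hY.symm,
    by rw [PresentedGroup.toGroup.of]; rfl, by rw [PresentedGroup.toGroup.of]; rfl⟩
end

section
/- Let s, t be complex numbers with s ≠ 0. Set X₁ = [[s, 1], [0, 1/s]], Y₁ = [[s, 0], [-t, 1/s]], X₃ = [[1/s, 1], [0, s]], Y₃ = [[1/s, 0], [-t, s]]. Assume the pair (X₁, Y₁) is irreducible, i.e., there is no nonzero vector v ∈ ℂ² that is simultaneously an eigenvector of X₁ and of Y₁. Then there exists an invertible 2×2 complex matrix P with P·X₁·P⁻¹ = X₃ and P·Y₁·P⁻¹ = Y₃; that is, the pairs (X₁, Y₁) and (X₃, Y₃) determine the same conjugacy class of representations. -/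
/-!
Write `k = s - s⁻¹`. Solving the linear equations `P X₁ = X₃ P`, `P Y₁ = Y₃ P` leads to
`P = !![t, k; t * k, t]`, whose determinant is `t * (t - k ^ 2)`. It vanishes only if `t = 0`, when
`(1, 0)` is a common eigenvector of `X₁` and `Y₁`, or if `t = k ^ 2`, when `(1, -k)` is one.
Irreducibility therefore makes this `P` invertible.
-/


/-- If the pair `(X₁, Y₁)` is irreducible (no common eigenvector), then the
pairs `(X₁, Y₁)` and `(X₃, Y₃)` are simultaneously conjugate. -/
theorem stmt_6 (s t : ℂ) (hs : s ≠ 0)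
    (X₁ Y₁ X₃ Y₃ : Matrix (Fin 2) (Fin 2) ℂ)
    (hX₁ : X₁ = !![s, 1; 0, s⁻¹])
    (hY₁ : Y₁ = !![s, 0; -t, s⁻¹])
    (hX₃ : X₃ = !![s⁻¹, 1; 0, s])
    (hY₃ : Y₃ = !![s⁻¹, 0; -t, s])
    (hirr : ¬ ∃ v : Fin 2 → ℂ, v ≠ 0 ∧
        (∃ a : ℂ, X₁.mulVec v = a • v) ∧ (∃ b : ℂ, Y₁.mulVec v = b • v)) :
    ∃ P : Matrix (Fin 2) (Fin 2) ℂ, IsUnit P.det ∧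
      P * X₁ * P⁻¹ = X₃ ∧ P * Y₁ * P⁻¹ = Y₃ := by
  subst hX₁ hY₁ hX₃ hY₃
  have ht : t ≠ 0 := by
    rintro rfl
    refine hirr ⟨![1, 0], by simp, ⟨s, ?_⟩, ⟨s, ?_⟩⟩ <;>
      ext i <;> fin_cases i <;> simp [Matrix.mulVec, dotProduct]
  have htk : t - (s - s⁻¹) ^ 2 ≠ 0 := by
    intro h
    obtain rfl : t = (s - s⁻¹) ^ 2 := sub_eq_zero.mp h
    refine hirr ⟨![1, -(s - s⁻¹)], by simp, ⟨s⁻¹, ?_⟩, ⟨s, ?_⟩⟩ <;>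
      ext i <;> fin_cases i <;> simp [Matrix.mulVec, dotProduct] <;> ring
  let P : Matrix (Fin 2) (Fin 2) ℂ := !![t, s - s⁻¹; t * (s - s⁻¹), t]
  have hdet : IsUnit P.det := by
    have h : P.det = t * (t - (s - s⁻¹) ^ 2) := by
      simp only [P, Matrix.det_fin_two_of]
      ring
    rw [h]
    exact (mul_ne_zero ht htk).isUnit
  have conj : ∀ A B : Matrix (Fin 2) (Fin 2) ℂ, P * A = B * P → P * A * P⁻¹ = B := by
    intro A B h
    rw [h, Matrix.mul_nonsing_inv_cancel_right _ _ hdet]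
  refine ⟨P, hdet, conj _ _ ?_, conj _ _ ?_⟩ <;>
    ext i j <;> fin_cases i <;> fin_cases j <;> simp [P, Matrix.mul_apply] <;> ring
end

section
/- Let s, t, t' be complex numbers with s ≠ 0 and t ≠ t'. Set X = [[s, 1], [0, 1/s]], Y = [[s, 0], [-t, 1/s]], Y' = [[s, 0], [-t', 1/s]]. Then there is no invertible 2×2 complex matrix P with P·X·P⁻¹ = X and P·Y·P⁻¹ = Y'; that is, the pairs (X, Y) and (X, Y') determine distinct conjugacy classes. -/
/-- For `t ≠ t'`, the pairs `(X, Y)` and `(X, Y')` are not simultaneously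
conjugate. -/
theorem stmt_7 (s t t' : ℂ) (hs : s ≠ 0) (htt' : t ≠ t')
    (X Y Y' : Matrix (Fin 2) (Fin 2) ℂ)
    (hX : X = !![s, 1; 0, s⁻¹])
    (hY : Y = !![s, 0; -t, s⁻¹])
    (hY' : Y' = !![s, 0; -t', s⁻¹]) :
    ¬ ∃ P : Matrix (Fin 2) (Fin 2) ℂ, IsUnit P.det ∧
        P * X * P⁻¹ = X ∧ P * Y * P⁻¹ = Y' := by
  rintro ⟨P, hP, h1, h2⟩
  -- The trace of the product is a conjugation invariant, and it determines `t`: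
  -- `tr (X * Y) = s ^ 2 - t + s⁻¹ ^ 2`.
  have key : (X * Y').trace = (X * Y).trace := by
    calc (X * Y').trace = (P * X * P⁻¹ * (P * Y * P⁻¹)).trace := by rw [h1, h2]
      _ = (P * (X * Y) * P⁻¹).trace := by
        simp only [Matrix.mul_assoc, Matrix.nonsing_inv_mul_cancel_left _ _ hP]
      _ = (X * Y).trace := by
        rw [Matrix.trace_mul_comm, Matrix.nonsing_inv_mul_cancel_left _ _ hP]
  subst hX hY hY'
  simp only [Matrix.mul_fin_two, Matrix.trace_fin_two_of] at key
  exact htt' (by linear_combination key)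
end
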